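/- arXiv:2105.10929 — 8 statements merged into one kernel-verified Lean document; each statement's English description precedes it below -/
import Mathlib

section
/- Let f : ℝ^n → ℝ^n, let Q ∈ ℝ^{n×n} be symmetric, and write p(y) = yᵀQy. Let g_1,…,g_s ∈ ℝ^n be stage values of an s-stage Runge–Kutta method with coefficient matrix 𝒜 = (a_{ij}) and weights b = (b_i), step size h, initial point x, i.e. g_i = x + h ∑_{j=1}^s a_{ij} f(g_j), and let φ_h(x) = x + h ∑_{j=1}^s b_j f(g_j). Then p(φ_h(x)) = p(x) + 2h ∑_{i=1}^s b_i g_iᵀ Q f(g_i) + h² ∑_{i,j=1}^s (b_i b_j − b_i a_{ij} − b_j a_{ji}) f(g_i)ᵀ Q f(g_j). -/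
open Matrix BigOperators

/-- Key identity for a quadratic form `p(y) = yᵀQy` evaluated at one step of a
Runge–Kutta method (cf. Hairer–Lubich–Wanner, Thm. IV.2.2 and the paper's
Theorem 1 proof). -/
theorem rk_quadratic_form_identity {n s : ℕ}
    (f : (Fin n → ℝ) → (Fin n → ℝ))
    (Q : Matrix (Fin n) (Fin n) ℝ) (hQ : Qᵀ = Q)
    (A : Matrix (Fin s) (Fin s) ℝ) (b : Fin s → ℝ) (h : ℝ)
    (x : Fin n → ℝ) (g : Fin s → (Fin n → ℝ))
    (hg : ∀ i, g i = x + h • ∑ j, A i j • f (g j))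
    (φ : Fin n → ℝ) (hφ : φ = x + h • ∑ j, b j • f (g j)) :
    φ ⬝ᵥ Q.mulVec φ =
      x ⬝ᵥ Q.mulVec x
        + 2 * h * ∑ i, b i * (g i ⬝ᵥ Q.mulVec (f (g i)))
        + h ^ 2 * ∑ i, ∑ j,
            (b i * b j - b i * A i j - b j * A j i)
              * (f (g i) ⬝ᵥ Q.mulVec (f (g j))) := by
  have symm : ∀ u v : Fin n → ℝ, u ⬝ᵥ Q.mulVec v = v ⬝ᵥ Q.mulVec u := by
    intro u v
    rw [dotProduct_mulVec, ← mulVec_transpose, hQ, dotProduct_comm]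
  have hsl : ∀ (c : Fin s → ℝ) (k : Fin s → Fin n → ℝ) (v : Fin n → ℝ),
      (∑ j, c j • k j) ⬝ᵥ Q.mulVec v = ∑ j, c j * (k j ⬝ᵥ Q.mulVec v) := by
    intro c k v
    simp [sum_dotProduct, smul_dotProduct]
  have hgi : ∀ i, g i ⬝ᵥ Q.mulVec (f (g i)) = x ⬝ᵥ Q.mulVec (f (g i))
      + h * ∑ j, A i j * (f (g i) ⬝ᵥ Q.mulVec (f (g j))) := by
    intro i
    have e : g i ⬝ᵥ Q.mulVec (f (g i))
        = (x + h • ∑ j, A i j • f (g j)) ⬝ᵥ Q.mulVec (f (g i)) :=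
      congrArg (fun y => y ⬝ᵥ Q.mulVec (f (g i))) (hg i)
    rw [e, add_dotProduct, smul_dotProduct, hsl, smul_eq_mul]
    simp only [symm (f (g i))]
  simp only [hgi]
  clear hgi hg
  generalize hk : (fun i => f (g i)) = k at *
  have hk' : ∀ i, f (g i) = k i := fun i => congrFun hk i
  simp only [hk'] at *
  have hL : φ ⬝ᵥ Q.mulVec φ = x ⬝ᵥ Q.mulVec x + 2 * h * ∑ i, b i * (x ⬝ᵥ Q.mulVec (k i))
      + h ^ 2 * ∑ i, ∑ j, b i * b j * (k i ⬝ᵥ Q.mulVec (k j)) := by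
    have h1 : ∀ v, v ⬝ᵥ Q.mulVec φ = v ⬝ᵥ Q.mulVec x + h * ∑ j, b j * (v ⬝ᵥ Q.mulVec (k j)) := by
      intro v
      rw [symm, hφ, add_dotProduct, smul_dotProduct, hsl, smul_eq_mul, symm x v]
      simp only [symm v]
    have h2 : φ ⬝ᵥ Q.mulVec φ = x ⬝ᵥ Q.mulVec φ + h * ∑ i, b i * (k i ⬝ᵥ Q.mulVec φ) := by
      conv_lhs => rw [symm, h1]
      rw [symm φ x]
      simp only [symm φ]
    rw [h2, h1 x]
    simp only [h1, mul_add, Finset.sum_add_distrib, symm _ x, Finset.mul_sum]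
    have h3 : ∀ i j, h * (b i * (h * (b j * (k i ⬝ᵥ Q.mulVec (k j)))))
        = h ^ 2 * (b i * b j * (k i ⬝ᵥ Q.mulVec (k j))) := fun i j => by ring
    simp only [h3, mul_assoc 2 h, ← Finset.mul_sum]
    ring
  rw [hL]
  have hS : ∑ i, ∑ j, b j * A j i * (k i ⬝ᵥ Q.mulVec (k j))
      = ∑ i, ∑ j, b i * A i j * (k i ⬝ᵥ Q.mulVec (k j)) := by
    rw [Finset.sum_comm]
    refine Finset.sum_congr rfl fun i _ => Finset.sum_congr rfl fun j _ => ?_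
    rw [symm]
  have hT : ∑ i, b i * (h * ∑ j, A i j * (k i ⬝ᵥ Q.mulVec (k j)))
      = h * ∑ i, ∑ j, b i * A i j * (k i ⬝ᵥ Q.mulVec (k j)) := by
    simp only [Finset.mul_sum]
    refine Finset.sum_congr rfl fun i _ => Finset.sum_congr rfl fun j _ => ?_
    ring
  simp only [sub_mul, Finset.sum_sub_distrib, mul_add, Finset.sum_add_distrib]
  rw [hS, hT]
  ring
end

section
/- Let 𝒜 = (a_{ij}) ∈ ℝ^{s×s} and b = (b_i) ∈ ℝ^s. If b_i b_j − b_i a_{ij} − b_j a_{ji} = 0 for all i,j ∈ {1,…,s} and a_{ij} a_{ik} − a_{ij} a_{jk} − a_{ik} a_{kj} = 0 for all i,j,k ∈ {1,…,s}, then a_{ij} = 0 for all i,j and b_i = 0 for all i. (These are the conditions under which a Runge–Kutta scheme would preserve an irreducible quadratic second integral; hence no Runge–Kutta method can preserve such an integral.) -/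
/-- The algebraic conditions on the Butcher coefficients required for a
Runge–Kutta method to preserve an irreducible quadratic second integral force
all coefficients and weights to vanish; hence no Runge–Kutta method can
preserve such an integral. -/
theorem rk_quadratic_second_integral_conditions_force_zero {s : ℕ}
    (A : Matrix (Fin s) (Fin s) ℝ) (b : Fin s → ℝ)
    (hb : ∀ i j, b i * b j - b i * A i j - b j * A j i = 0)
    (hA : ∀ i j k, A i j * A i k - A i j * A j k - A i k * A k j = 0) :
    (∀ i j, A i j = 0) ∧ (∀ i, b i = 0) := by
  have hd : ∀ i, A i i = 0 := fun i => by
    have h := hA i i i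
    exact pow_eq_zero_iff (two_ne_zero) |>.1 (by linarith : A i i ^ 2 = 0)
  have hz : ∀ i j, A i j = 0 := fun i j => by
    have h := hA i j j
    rw [hd j] at h
    exact pow_eq_zero_iff (two_ne_zero) |>.1 (by linarith : A i j ^ 2 = 0)
  refine ⟨hz, fun i => ?_⟩
  have h := hb i i
  rw [hd i] at h
  exact pow_eq_zero_iff (two_ne_zero) |>.1 (by linarith : b i ^ 2 = 0)
end

section
/- Let f : ℝ^n → ℝ^n, p ∈ ℝ^n and c : ℝ^n → ℝ satisfy pᵀ f(y) = c(y) (pᵀ y) for all y ∈ ℝ^n (p is an affine second integral with cofactor c). Let g_1,…,g_s ∈ ℝ^n satisfy the Runge–Kutta stage equations g_i = x + h ∑_{j=1}^s a_{ij} f(g_j), let φ_h(x) = x + h ∑_{j=1}^s b_j f(g_j), and set D_c = diag(c(g_1),…,c(g_s)) ∈ ℝ^{s×s}. If the matrix I − h𝒜D_c is invertible, then pᵀ φ_h(x) = (1 + h bᵀ D_c (I − h𝒜D_c)^{-1} 𝟙) · (pᵀ x), where 𝟙 ∈ ℝ^s is the all-ones vector. -/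
open Matrix BigOperators

/-- Theorem: every Runge–Kutta method preserves affine second integrals
`p(x) = pᵀx`, with discrete cofactor `1 + h bᵀ D_c (I − h𝒜D_c)⁻¹ 𝟙`. -/
theorem rk_preserves_affine_second_integral {n s : ℕ}
    (f : (Fin n → ℝ) → (Fin n → ℝ))
    (p : Fin n → ℝ) (c : (Fin n → ℝ) → ℝ)
    (hp : ∀ y, p ⬝ᵥ f y = c y * (p ⬝ᵥ y))
    (A : Matrix (Fin s) (Fin s) ℝ) (b : Fin s → ℝ) (h : ℝ)
    (x : Fin n → ℝ) (g : Fin s → (Fin n → ℝ))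
    (hg : ∀ i, g i = x + h • ∑ j, A i j • f (g j))
    (φ : Fin n → ℝ) (hφ : φ = x + h • ∑ j, b j • f (g j))
    (Dc : Matrix (Fin s) (Fin s) ℝ)
    (hDc : Dc = Matrix.diagonal fun i => c (g i))
    (hinv : IsUnit ((1 : Matrix (Fin s) (Fin s) ℝ) - h • (A * Dc))) :
    p ⬝ᵥ φ =
      (1 + h * (b ⬝ᵥ (Dc * ((1 : Matrix (Fin s) (Fin s) ℝ) - h • (A * Dc))⁻¹).mulVec
        (fun _ => (1 : ℝ)))) * (p ⬝ᵥ x) := by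
  have key : ∀ w : Fin s → ℝ, p ⬝ᵥ (x + h • ∑ j, w j • f (g j)) =
      p ⬝ᵥ x + h * (w ⬝ᵥ (Dc *ᵥ fun j => p ⬝ᵥ g j)) := by
    intro w
    rw [dotProduct_add, dotProduct_smul, dotProduct_sum, smul_eq_mul]
    congr 2
    rw [dotProduct]
    refine Finset.sum_congr rfl fun j _ => ?_
    rw [dotProduct_smul, hp, hDc, mulVec_diagonal, smul_eq_mul]
  have hM : ((1 : Matrix (Fin s) (Fin s) ℝ) - h • (A * Dc)) *ᵥ (fun j => p ⬝ᵥ g j) =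
      (p ⬝ᵥ x) • (fun _ => (1 : ℝ)) := by
    rw [sub_mulVec, one_mulVec, smul_mulVec, ← mulVec_mulVec]
    funext i
    have hi : p ⬝ᵥ g i = p ⬝ᵥ x + h * (A i ⬝ᵥ (Dc *ᵥ fun j => p ⬝ᵥ g j)) := by
      rw [← key (A i), ← hg i]
    have e : (A *ᵥ (Dc *ᵥ fun j => p ⬝ᵥ g j)) i = A i ⬝ᵥ (Dc *ᵥ fun j => p ⬝ᵥ g j) := rfl
    simp only [Pi.sub_apply, Pi.smul_apply, smul_eq_mul, e]
    linarith
  have hdet := (Matrix.isUnit_iff_isUnit_det _).mp hinv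
  have hv : (fun j => p ⬝ᵥ g j) =
      (p ⬝ᵥ x) • (((1 : Matrix (Fin s) (Fin s) ℝ) - h • (A * Dc))⁻¹ *ᵥ (fun _ => (1 : ℝ))) := by
    rw [← mulVec_smul, ← hM, mulVec_mulVec, nonsing_inv_mul _ hdet, one_mulVec]
  rw [hφ, key b, hv, mulVec_smul, dotProduct_smul, mulVec_mulVec, smul_eq_mul]
  ring
end

section
/- Let f : ℝ^n → ℝ^n, q, r ∈ ℝ^n and c : ℝ^n → ℝ satisfy qᵀ f(y) = c(y)(qᵀy) and rᵀ f(y) = c(y)(rᵀy) for all y ∈ ℝ^n (q and r are affine second integrals with the same cofactor c). Let g_1,…,g_s ∈ ℝ^n satisfy the Runge–Kutta stage equations g_i = x + h ∑_{j=1}^s a_{ij} f(g_j), let φ_h(x) = x + h ∑_{j=1}^s b_j f(g_j), and set D_c = diag(c(g_1),…,c(g_s)). If I − h𝒜D_c is invertible, then (qᵀ φ_h(x)) · (rᵀ x) = (qᵀ x) · (rᵀ φ_h(x)); in particular the rational first integral H(x) = (qᵀx)/(rᵀx) is preserved by every Runge–Kutta method. -/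
open Matrix BigOperators

/-- Corollary: all Runge–Kutta methods preserve rational first integrals
`H(x) = (qᵀx)/(rᵀx)` with affine numerator and denominator, since the two
affine second integrals share the same cofactor. -/
theorem rk_preserves_affine_rational_integral {n s : ℕ}
    (f : (Fin n → ℝ) → (Fin n → ℝ))
    (q r : Fin n → ℝ) (c : (Fin n → ℝ) → ℝ)
    (hq : ∀ y, q ⬝ᵥ f y = c y * (q ⬝ᵥ y))
    (hr : ∀ y, r ⬝ᵥ f y = c y * (r ⬝ᵥ y))
    (A : Matrix (Fin s) (Fin s) ℝ) (b : Fin s → ℝ) (h : ℝ)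
    (x : Fin n → ℝ) (g : Fin s → (Fin n → ℝ))
    (hg : ∀ i, g i = x + h • ∑ j, A i j • f (g j))
    (φ : Fin n → ℝ) (hφ : φ = x + h • ∑ j, b j • f (g j))
    (Dc : Matrix (Fin s) (Fin s) ℝ)
    (hDc : Dc = Matrix.diagonal fun i => c (g i))
    (hinv : IsUnit ((1 : Matrix (Fin s) (Fin s) ℝ) - h • (A * Dc))) :
    (q ⬝ᵥ φ) * (r ⬝ᵥ x) = (q ⬝ᵥ x) * (r ⬝ᵥ φ) := by
  set p : Fin n → ℝ := (r ⬝ᵥ x) • q - (q ⬝ᵥ x) • r with hp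
  have hpe : ∀ y, p ⬝ᵥ y = (r ⬝ᵥ x) * (q ⬝ᵥ y) - (q ⬝ᵥ x) * (r ⬝ᵥ y) := by
    intro y
    simp [hp, sub_dotProduct, smul_dotProduct]
  have hpf : ∀ y, p ⬝ᵥ f y = c y * (p ⬝ᵥ y) := by
    intro y
    rw [hpe, hpe, hq, hr]; ring
  have hpx : p ⬝ᵥ x = 0 := by rw [hpe]; ring
  have hsum : ∀ w : Fin s → ℝ, p ⬝ᵥ (x + h • ∑ j, w j • f (g j))
      = h * ∑ j, w j * (c (g j) * (p ⬝ᵥ g j)) := by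
    intro w
    rw [dotProduct_add, hpx, dotProduct_smul, dotProduct_sum, zero_add, smul_eq_mul]
    simp only [dotProduct_smul, smul_eq_mul, hpf]
  have hu : (fun i => p ⬝ᵥ g i) = 0 := by
    apply Matrix.mulVec_injective_of_isUnit hinv
    rw [Matrix.mulVec_zero, Matrix.sub_mulVec, Matrix.one_mulVec, sub_eq_zero]
    funext i
    rw [Matrix.smul_mulVec, ← Matrix.mulVec_mulVec, hDc]
    have h1 : p ⬝ᵥ g i = h * ∑ j, A i j * (c (g j) * (p ⬝ᵥ g j)) := by
      conv_lhs => rw [hg i]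
      exact hsum (A i)
    rw [h1]
    rw [Pi.smul_apply, smul_eq_mul]
    congr 1
    refine Finset.sum_congr rfl fun j _ => ?_
    rw [Matrix.mulVec_diagonal]
  have hpφ : p ⬝ᵥ φ = 0 := by
    rw [hφ, hsum]
    have : ∀ j, p ⬝ᵥ g j = 0 := fun j => congrFun hu j
    simp [this]
  rw [hpe] at hpφ
  linarith
end

section
/- Let n ≥ 2, let φ : ℝ^n → ℝ^n and c̃ : ℝ^n → ℝ both be differentiable at a point x₀ ∈ ℝ^n, and suppose that for all x ∈ ℝ^n the first two components of φ satisfy φ(x)_1 = c̃(x) x_1 and φ(x)_2 = c̃(x) x_2 (i.e. the coordinate functions x_1 and x_2 are discrete second integrals of φ with the same cofactor c̃). If c̃(x₀) = 0, then the Jacobian determinant of φ at x₀ vanishes: det(Dφ(x₀)) = 0. (Thus the common cofactor of two affine discrete second integrals divides the Jacobian determinant of the map.) -/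
open Matrix

/-- If a differentiable map `φ` has two coordinate functions `x₁, x₂` as
discrete second integrals with the same cofactor `c̃`, then at any point where
the cofactor vanishes so does the Jacobian determinant of `φ`; i.e., the
cofactor divides the Jacobian determinant. -/
theorem cofactor_divides_jacobian_determinant {n : ℕ} (hn : 2 ≤ n)
    (φ : (Fin n → ℝ) → (Fin n → ℝ)) (ctilde : (Fin n → ℝ) → ℝ)
    (x₀ : Fin n → ℝ)
    (hφ : DifferentiableAt ℝ φ x₀) (hc : DifferentiableAt ℝ ctilde x₀)
    (h1 : ∀ x : Fin n → ℝ, φ x ⟨0, by omega⟩ = ctilde x * x ⟨0, by omega⟩)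
    (h2 : ∀ x : Fin n → ℝ, φ x ⟨1, by omega⟩ = ctilde x * x ⟨1, by omega⟩)
    (h0 : ctilde x₀ = 0) :
    LinearMap.det (fderiv ℝ φ x₀ : (Fin n → ℝ) →ₗ[ℝ] (Fin n → ℝ)) = 0 := by
  have key : ∀ i : Fin n, (∀ x : Fin n → ℝ, φ x i = ctilde x * x i) →
      ∀ v, fderiv ℝ φ x₀ v i = x₀ i * fderiv ℝ ctilde x₀ v := by
    intro i hi v
    have a1 : HasFDerivAt (fun x => φ x i)
        ((ContinuousLinearMap.proj (R := ℝ) (φ := fun _ : Fin n => ℝ) i).comp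
          (fderiv ℝ φ x₀)) x₀ := (hasFDerivAt_pi'.1 hφ.hasFDerivAt) i
    have a2 := hc.hasFDerivAt.mul (hasFDerivAt_apply (𝕜 := ℝ) i x₀)
    have a3 : (fun x => φ x i) = ctilde * (fun x : Fin n → ℝ => x i) := by
      funext x
      exact hi x
    rw [a3] at a1
    have a4 := congrArg (fun L => L v) (a1.unique a2)
    simpa [h0] using a4
  by_contra hdet
  have hsurj : Function.Surjective (fderiv ℝ φ x₀) :=
    (LinearMap.equivOfDetNeZero _ hdet).surjective
  obtain ⟨v, hv⟩ := hsurj (Pi.single ⟨0, by omega⟩ 1)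
  obtain ⟨w, hw⟩ := hsurj (Pi.single ⟨1, by omega⟩ 1)
  have e1 := key _ h1 v
  have e2 := key _ h2 v
  have e3 := key _ h2 w
  rw [hv] at e1 e2
  rw [hw] at e3
  simp at e1 e2 e3
  rcases e2 with h | h <;> simp [h] at e1 e3
end

section
/- Let f : ℝ^n → ℝ^n, p ∈ ℝ^n and λ ∈ ℝ satisfy pᵀ f(y) = λ (pᵀ y) for all y ∈ ℝ^n (p is an affine second integral with constant cofactor λ). Let g_1,…,g_s ∈ ℝ^n satisfy the Runge–Kutta stage equations g_i = x + h ∑_{j=1}^s a_{ij} f(g_j) and let φ_h(x) = x + h ∑_{j=1}^s b_j f(g_j). If the matrix I − hλ𝒜 ∈ ℝ^{s×s} is invertible, then pᵀ φ_h(x) = R(λh) · (pᵀ x), where R(z) = 1 + z bᵀ (I − z𝒜)^{-1} 𝟙 is the stability function of the method and 𝟙 ∈ ℝ^s is the all-ones vector. -/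
open Matrix BigOperators

/-- Corollary: if `p` is an affine second integral with constant cofactor `λ`,
then any Runge–Kutta method preserves it with discrete cofactor equal to the
stability function `R(λh) = 1 + λh bᵀ(I − λh𝒜)⁻¹𝟙`. -/
theorem rk_constant_cofactor_stability_function {n s : ℕ}
    (f : (Fin n → ℝ) → (Fin n → ℝ))
    (p : Fin n → ℝ) (lam : ℝ)
    (hp : ∀ y, p ⬝ᵥ f y = lam * (p ⬝ᵥ y))
    (A : Matrix (Fin s) (Fin s) ℝ) (b : Fin s → ℝ) (h : ℝ)
    (x : Fin n → ℝ) (g : Fin s → (Fin n → ℝ))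
    (hg : ∀ i, g i = x + h • ∑ j, A i j • f (g j))
    (φ : Fin n → ℝ) (hφ : φ = x + h • ∑ j, b j • f (g j))
    (hinv : IsUnit ((1 : Matrix (Fin s) (Fin s) ℝ) - (lam * h) • A)) :
    p ⬝ᵥ φ =
      (1 + (lam * h) * (b ⬝ᵥ (((1 : Matrix (Fin s) (Fin s) ℝ) - (lam * h) • A)⁻¹).mulVec
        (fun _ => (1 : ℝ)))) * (p ⬝ᵥ x) := by
  have key : ∀ c : Fin s → ℝ, p ⬝ᵥ (x + h • ∑ j, c j • f (g j)) =
      p ⬝ᵥ x + (lam * h) * (c ⬝ᵥ fun j => p ⬝ᵥ g j) := by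
    intro c
    rw [dotProduct_add, dotProduct_smul, dotProduct_sum, smul_eq_mul]
    congr 1
    rw [show (c ⬝ᵥ fun j => p ⬝ᵥ g j) = ∑ j, c j * (p ⬝ᵥ g j) from rfl,
      Finset.mul_sum, Finset.mul_sum]
    refine Finset.sum_congr rfl fun j _ => ?_
    rw [dotProduct_smul, hp, smul_eq_mul]
    ring
  set M := (1 : Matrix (Fin s) (Fin s) ℝ) - (lam * h) • A with hM
  have h1 : M.mulVec (fun j => p ⬝ᵥ g j) = (p ⬝ᵥ x) • (fun _ => (1 : ℝ)) := by
    funext i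
    have h2 : p ⬝ᵥ g i = p ⬝ᵥ x + (lam * h) * (A i ⬝ᵥ fun j => p ⬝ᵥ g j) := by
      rw [← key (A i), ← hg i]
    rw [hM, sub_mulVec, one_mulVec, smul_mulVec]
    simp only [Pi.sub_apply, Pi.smul_apply, smul_eq_mul, mul_one]
    change p ⬝ᵥ g i - (lam * h) * (A i ⬝ᵥ fun j => p ⬝ᵥ g j) = _
    linarith
  have h3 : (fun j => p ⬝ᵥ g j) = (p ⬝ᵥ x) • M⁻¹.mulVec (fun _ => (1 : ℝ)) := by
    rw [← mulVec_smul, ← h1, mulVec_mulVec,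
      nonsing_inv_mul M ((isUnit_iff_isUnit_det M).1 hinv), one_mulVec]
  rw [hφ, key b, h3, dotProduct_smul, smul_eq_mul]
  ring
end

section
/- Let A, S ∈ ℝ^{n×n} with Aᵀ = −A (skew-symmetric) and Sᵀ = S (symmetric), let P be a real polynomial, and set M = AS. If the matrix P(−M) (polynomial evaluation of P at the matrix −M) is invertible, then the matrix R = P(M) P(−M)^{-1} satisfies Rᵀ S R = S. -/
open Matrix Polynomial

theorem aeval_transpose_intertwine {n : ℕ} (S X Y : Matrix (Fin n) (Fin n) ℝ)
    (h : Xᵀ * S = S * Y) (P : Polynomial ℝ) :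
    (Polynomial.aeval X P)ᵀ * S = S * Polynomial.aeval Y P := by
  have hp : ∀ k : ℕ, (Xᵀ) ^ k * S = S * Y ^ k := by
    intro k
    induction k with
    | zero => simp
    | succ k ih => rw [pow_succ, Matrix.mul_assoc, h, ← Matrix.mul_assoc, ih, Matrix.mul_assoc,
        ← pow_succ]
  induction P using Polynomial.induction_on' with
  | add p q hp hq => simp only [map_add, Matrix.transpose_add, Matrix.add_mul, Matrix.mul_add, hp, hq]
  | monomial k a =>
    simp only [Polynomial.aeval_monomial, ← Algebra.smul_def, Matrix.transpose_smul,
      Matrix.transpose_pow, Matrix.smul_mul, Matrix.mul_smul, hp]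

/-- For `A` skew-symmetric, `S` symmetric, `M = AS`, and any real polynomial
`P` with `P(−M)` invertible, the diagonal Padé-type matrix
`R = P(M)P(−M)⁻¹` satisfies `Rᵀ S R = S`. -/
theorem diagonal_pade_matrix_preserves_quadratic_form {n : ℕ}
    (A S : Matrix (Fin n) (Fin n) ℝ)
    (hA : Aᵀ = -A) (hS : Sᵀ = S)
    (P : Polynomial ℝ) (M : Matrix (Fin n) (Fin n) ℝ) (hM : M = A * S)
    (hinv : IsUnit (Polynomial.aeval (-M) P))
    (R : Matrix (Fin n) (Fin n) ℝ)
    (hR : R = Polynomial.aeval M P * (Polynomial.aeval (-M) P)⁻¹) :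
    Rᵀ * S * R = S := by
  have h0 : Mᵀ * S = S * (-M) := by
    rw [hM, Matrix.transpose_mul, hA, hS]
    simp [Matrix.mul_assoc]
  have h1 := aeval_transpose_intertwine S M (-M) h0 P
  have h2 := aeval_transpose_intertwine S (-M) M (by
    rw [Matrix.transpose_neg, Matrix.neg_mul, h0]; simp) P
  have hc : Commute (Polynomial.aeval M P) (Polynomial.aeval (-M) P) := by
    have e : Polynomial.aeval (-M) P = Polynomial.aeval M (P.comp (-X)) := by
      simp [Polynomial.aeval_comp]
    rw [e]
    exact (Commute.all P (P.comp (-X))).map (Polynomial.aeval M)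
  have hd := (Matrix.isUnit_iff_isUnit_det _).1 hinv
  generalize Polynomial.aeval M P = U at *
  generalize Polynomial.aeval (-M) P = Q at *
  have hQ : Q * Q⁻¹ = 1 := Matrix.mul_nonsing_inv _ hd
  have hT : (Q⁻¹)ᵀ * Qᵀ = 1 := by rw [← Matrix.transpose_mul, hQ, Matrix.transpose_one]
  calc Rᵀ * S * R = (Q⁻¹)ᵀ * (Uᵀ * S) * (U * Q⁻¹) := by
        rw [hR, Matrix.transpose_mul]; simp only [Matrix.mul_assoc]
    _ = (Q⁻¹)ᵀ * S * (Q * U) * Q⁻¹ := by rw [h1]; simp only [Matrix.mul_assoc]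
    _ = (Q⁻¹)ᵀ * (S * U) * (Q * Q⁻¹) := by rw [← hc.eq]; simp only [Matrix.mul_assoc]
    _ = S := by rw [hQ, ← h2, ← Matrix.mul_assoc, hT]; simp
end

section
/- Let A, S ∈ ℝ^{n×n} with Aᵀ = −A and Sᵀ = S, let P be a real polynomial, set M = AS, and suppose P(−M) is invertible. Let R = P(M) P(−M)^{-1}. Then for every x ∈ ℝ^n, (Rx)ᵀ S (Rx) = xᵀ S x. (Hence every diagonal Padé Runge–Kutta map applied to a linear ODE ẋ = ASx preserves the quadratic first integral H(x) = xᵀSx exactly.) -/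
open Matrix Polynomial

theorem aeval_transpose_mul_aux {n : ℕ} (S N N' : Matrix (Fin n) (Fin n) ℝ)
    (h : Nᵀ * S = S * N') (P : Polynomial ℝ) :
    (Polynomial.aeval N P)ᵀ * S = S * Polynomial.aeval N' P := by
  have hpow : ∀ k : ℕ, (Nᵀ) ^ k * S = S * N' ^ k := by
    intro k
    induction k with
    | zero => simp
    | succ k ih => rw [pow_succ, Matrix.mul_assoc, h, ← Matrix.mul_assoc, ih, Matrix.mul_assoc, pow_succ]
  induction P using Polynomial.induction_on' with
  | add p q hp hq => simp only [map_add, Matrix.transpose_add, Matrix.add_mul, Matrix.mul_add, hp, hq]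
  | monomial k a =>
    simp only [Polynomial.aeval_monomial, ← Algebra.smul_def, Matrix.transpose_smul,
      Matrix.transpose_pow, Matrix.smul_mul, Matrix.mul_smul, hpow]

/-- Every diagonal Padé Runge–Kutta map `x ↦ P(M)P(−M)⁻¹ x` applied to the
linear ODE `ẋ = ASx` (with `A` skew-symmetric, `S` symmetric, `M = AS`)
preserves the quadratic first integral `H(x) = xᵀSx` exactly. -/
theorem diagonal_pade_rk_preserves_quadratic_integral {n : ℕ}
    (A S : Matrix (Fin n) (Fin n) ℝ)
    (hA : Aᵀ = -A) (hS : Sᵀ = S)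
    (P : Polynomial ℝ) (M : Matrix (Fin n) (Fin n) ℝ) (hM : M = A * S)
    (hinv : IsUnit (Polynomial.aeval (-M) P))
    (R : Matrix (Fin n) (Fin n) ℝ)
    (hR : R = Polynomial.aeval M P * (Polynomial.aeval (-M) P)⁻¹) :
    ∀ x : Fin n → ℝ,
      R.mulVec x ⬝ᵥ S.mulVec (R.mulVec x) = x ⬝ᵥ S.mulVec x := by
  have h1 : Mᵀ * S = S * (-M) := by
    rw [hM, Matrix.transpose_mul, hA, hS]
    simp [Matrix.mul_assoc]
  have h2 : (-M)ᵀ * S = S * M := by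
    rw [Matrix.transpose_neg, Matrix.neg_mul, h1]
    simp
  have e1 := aeval_transpose_mul_aux S M (-M) h1 P
  have e2 := aeval_transpose_mul_aux S (-M) M h2 P
  have hc : Polynomial.aeval (-M) P * Polynomial.aeval M P
      = Polynomial.aeval M P * Polynomial.aeval (-M) P := by
    have : Polynomial.aeval (-M) P = Polynomial.aeval M (P.comp (-Polynomial.X)) := by
      rw [Polynomial.aeval_comp]
      simp
    rw [this, ← map_mul, ← map_mul, mul_comm]
  have hdet := (Matrix.isUnit_iff_isUnit_det _).1 hinv
  generalize Polynomial.aeval (-M) P = Q at *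
  generalize Polynomial.aeval M P = T at *
  have hQ : Q * Q⁻¹ = 1 := Matrix.mul_nonsing_inv Q hdet
  have hQt : (Q⁻¹)ᵀ * Qᵀ = 1 := by
    rw [← Matrix.transpose_mul, hQ, Matrix.transpose_one]
  have key : Rᵀ * S * R = S := by
    calc Rᵀ * S * R = (Q⁻¹)ᵀ * (Tᵀ * S) * (T * Q⁻¹) := by
          rw [hR, Matrix.transpose_mul]
          simp only [Matrix.mul_assoc]
      _ = (Q⁻¹)ᵀ * S * (Q * T) * Q⁻¹ := by
          rw [e1]
          simp only [Matrix.mul_assoc]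
      _ = (Q⁻¹)ᵀ * (S * T) * (Q * Q⁻¹) := by
          rw [hc]
          simp only [Matrix.mul_assoc]
      _ = ((Q⁻¹)ᵀ * Qᵀ) * S := by
          rw [hQ, ← e2]
          simp only [Matrix.mul_assoc, Matrix.mul_one]
      _ = S := by rw [hQt, Matrix.one_mul]
  intro x
  conv_rhs => rw [← key]
  rw [← Matrix.mulVec_mulVec, ← Matrix.mulVec_mulVec, Matrix.dotProduct_mulVec x Rᵀ,
    Matrix.vecMul_transpose]
end
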